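/- arXiv:2506.02693 — 2 statements merged into one kernel-verified Lean document; each statement's English description precedes it below -/
import Mathlib

section
/- Let M_0, M_1, …, M_g be positive integers, set e_i := gcd(M_0, …, M_i) and N_i := e_{i−1}/e_i for 1 ≤ i ≤ g, and assume N_i·M_i ∈ ⟨M_0, …, M_{i−1}⟩ for every 1 ≤ i ≤ g (i.e. the semigroup is free/telescopic). Then every element v of the additive submonoid ⟨M_0, …, M_g⟩ of ℕ has a unique representation v = Σ_{i=0}^{g} k_i M_i with k_0 ∈ ℕ and 0 ≤ k_i < N_i for 1 ≤ i ≤ g. -/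
/-!
Both halves go by induction on `g`, peeling off the last generator.

Existence: write `v = w + a * M_g` with `w ∈ ⟨M_0, …, M_{g-1}⟩` and divide `a = N_g * q + r`.
Since `N_g * M_g ∈ ⟨M_0, …, M_{g-1}⟩`, the element `w + q * N_g * M_g` stays in the smaller
submonoid, so `r` serves as the last coefficient (`exists_rep`).

Uniqueness: all of `M_0, …, M_{g-1}` are divisible by `e_{g-1}`, so two representations of the
same number satisfy `k_g * M_g ≡ k'_g * M_g` modulo `e_{g-1}`.  Cancelling `M_g` leaves a
congruence modulo `e_{g-1} / gcd(e_{g-1}, M_g) = N_g`, and both coefficients are below `N_g`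
(`rep_unique`).
-/

/- STATEMENT 13: in a free (telescopic) numerical semigroup ⟨M_0, …, M_g⟩ with
e_i = gcd(M_0, …, M_i) and N_i = e_{i-1}/e_i, every element has a unique representation
Σ k_i M_i with k_0 ∈ ℕ and 0 ≤ k_i < N_i for 1 ≤ i ≤ g. -/

namespace CurvePaper

lemma gcd_range_succ (M : ℕ → ℕ) (n : ℕ) :
    (Finset.range (n + 1)).gcd M = Nat.gcd ((Finset.range n).gcd M) (M n) := by
  rw [Finset.range_add_one, Finset.gcd_insert, Nat.gcd_comm]
  rfl

lemma ratio_pos (M : ℕ → ℕ) (h0 : 0 < M 0) (n : ℕ) (hn : 1 ≤ n) :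
    0 < (Finset.range n).gcd M / (Finset.range (n + 1)).gcd M := by
  have he : 0 < (Finset.range n).gcd M :=
    Nat.pos_of_dvd_of_pos (Finset.gcd_dvd (Finset.mem_range.2 hn)) h0
  rw [gcd_range_succ]
  exact Nat.div_pos (Nat.gcd_le_left _ he) (Nat.gcd_pos_of_pos_left _ he)

lemma mem_closure_Iic (M : ℕ → ℕ) (n v : ℕ)
    (hv : v ∈ AddSubmonoid.closure (M '' Set.Iic n)) :
    ∃ w ∈ AddSubmonoid.closure (M '' Set.Iio n), ∃ a : ℕ, v = w + a * M n := by
  rw [← Set.Iio_insert, Set.image_insert_eq, Set.insert_eq, AddSubmonoid.closure_union,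
    AddSubmonoid.mem_sup] at hv
  obtain ⟨y, hy, w, hw, rfl⟩ := hv
  obtain ⟨a, rfl⟩ := AddSubmonoid.mem_closure_singleton.1 hy
  exact ⟨w, hw, a, by rw [smul_eq_mul, add_comm]⟩

lemma exists_rep (M : ℕ → ℕ) (h0 : 0 < M 0) (g : ℕ)
    (hfree : ∀ i, 1 ≤ i → i ≤ g →
      ((Finset.range i).gcd M / (Finset.range (i + 1)).gcd M) * M i ∈
        AddSubmonoid.closure (M '' Set.Iio i)) :
    ∀ v ∈ AddSubmonoid.closure (M '' Set.Iic g),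
      ∃ k : ℕ → ℕ,
        (∀ i, g < i → k i = 0) ∧
        (∀ i, 1 ≤ i → i ≤ g →
          k i < (Finset.range i).gcd M / (Finset.range (i + 1)).gcd M) ∧
        v = ∑ i ∈ Finset.range (g + 1), k i * M i := by
  induction g with
  | zero =>
    intro v hv
    obtain ⟨w, hw, a, rfl⟩ := mem_closure_Iic M 0 v hv
    have hw0 : w = 0 := by simpa using hw
    refine ⟨fun i => if i = 0 then a else 0, fun i hi => if_neg (by omega),
      fun i h1 h2 => by omega, by simp [hw0]⟩
  | succ n ih =>
    intro v hv
    obtain ⟨w, hw, a, rfl⟩ := mem_closure_Iic M (n + 1) v hv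
    have hN := ratio_pos M h0 (n + 1) (by omega)
    have hNM := hfree (n + 1) (by omega) le_rfl
    set N := (Finset.range (n + 1)).gcd M / (Finset.range (n + 1 + 1)).gcd M
    have hIio : Set.Iio (n + 1) = Set.Iic n := by ext; simp
    have hmem : w + (a / N) * (N * M (n + 1)) ∈ AddSubmonoid.closure (M '' Set.Iic n) := by
      rw [hIio] at hw hNM
      exact add_mem hw (by simpa using nsmul_mem hNM (a / N))
    obtain ⟨k, hk0, hkN, hksum⟩ := ih (fun i h1 h2 => hfree i h1 (by omega)) _ hmem
    refine ⟨Function.update k (n + 1) (a % N), fun i hi => ?_, fun i h1 h2 => ?_, ?_⟩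
    · rw [Function.update_of_ne (by omega)]
      exact hk0 i (by omega)
    · rcases Nat.lt_or_ge n i with h | h
      · obtain rfl : i = n + 1 := by omega
        rw [Function.update_self]
        exact Nat.mod_lt _ hN
      · rw [Function.update_of_ne (by omega)]
        exact hkN i h1 h
    · rw [Finset.sum_range_succ, Function.update_self]
      have hsum : ∑ i ∈ Finset.range (n + 1), Function.update k (n + 1) (a % N) i * M i
          = ∑ i ∈ Finset.range (n + 1), k i * M i := by
        refine Finset.sum_congr rfl fun i hi => ?_
        rw [Function.update_of_ne (Finset.mem_range.1 hi).ne]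
      rw [hsum, ← hksum]
      nth_rewrite 1 [← Nat.div_add_mod a N]
      ring

lemma rep_unique (M : ℕ → ℕ) (h0 : 0 < M 0) (g : ℕ) (k l : ℕ → ℕ)
    (hk : ∀ i, 1 ≤ i → i ≤ g →
      k i < (Finset.range i).gcd M / (Finset.range (i + 1)).gcd M)
    (hl : ∀ i, 1 ≤ i → i ≤ g →
      l i < (Finset.range i).gcd M / (Finset.range (i + 1)).gcd M)
    (h : ∑ i ∈ Finset.range (g + 1), k i * M i = ∑ i ∈ Finset.range (g + 1), l i * M i) :
    ∀ i ≤ g, k i = l i := by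
  induction g with
  | zero =>
    intro i hi
    obtain rfl : i = 0 := by omega
    simpa [h0.ne'] using h
  | succ n ih =>
    rw [Finset.sum_range_succ _ (n + 1), Finset.sum_range_succ _ (n + 1)] at h
    have he : 0 < (Finset.range (n + 1)).gcd M :=
      Nat.pos_of_dvd_of_pos (Finset.gcd_dvd (Finset.mem_range.2 (by omega))) h0
    have hdvd : ∀ f : ℕ → ℕ, ∑ i ∈ Finset.range (n + 1), f i * M i
        ≡ 0 [MOD (Finset.range (n + 1)).gcd M] := fun f =>
      (Nat.modEq_zero_iff_dvd).2
        (Finset.dvd_sum fun i hi => (Finset.gcd_dvd hi).mul_left _)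
    have hmod : k (n + 1) * M (n + 1) ≡ l (n + 1) * M (n + 1)
        [MOD (Finset.range (n + 1)).gcd M] :=
      Nat.ModEq.add_left_cancel ((hdvd k).trans (hdvd l).symm) (congrArg (· % _) h)
    have hmodN := Nat.ModEq.cancel_right_div_gcd he hmod
    rw [← gcd_range_succ] at hmodN
    have hlast : k (n + 1) = l (n + 1) :=
      hmodN.eq_of_lt_of_lt (hk _ (by omega) le_rfl) (hl _ (by omega) le_rfl)
    rw [hlast] at h
    have hih := ih (fun i h1 h2 => hk i h1 (by omega)) (fun i h1 h2 => hl i h1 (by omega))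
      (Nat.add_right_cancel h)
    intro i hi
    rcases Nat.lt_or_ge n i with h' | h'
    · obtain rfl : i = n + 1 := by omega
      exact hlast
    · exact hih i h'

/-- Unique representation of the elements of a free numerical semigroup.  Here
`(Finset.range (i+1)).gcd M` is `e_i = gcd(M_0, …, M_i)` and
`(Finset.range i).gcd M / (Finset.range (i+1)).gcd M` is `N_i = e_{i-1}/e_i`. -/
theorem statement13 (g : ℕ) (M : ℕ → ℕ) (hpos : ∀ i ≤ g, 0 < M i)
    (hfree : ∀ i, 1 ≤ i → i ≤ g →
      ((Finset.range i).gcd M / (Finset.range (i + 1)).gcd M) * M i ∈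
        AddSubmonoid.closure (M '' Set.Iio i)) :
    ∀ v ∈ AddSubmonoid.closure (M '' Set.Iic g),
      ∃! k : ℕ → ℕ,
        (∀ i, g < i → k i = 0) ∧
        (∀ i, 1 ≤ i → i ≤ g →
          k i < (Finset.range i).gcd M / (Finset.range (i + 1)).gcd M) ∧
        v = ∑ i ∈ Finset.range (g + 1), k i * M i := by
  intro v hv
  obtain ⟨k, hk0, hkN, hksum⟩ := exists_rep M (hpos 0 (Nat.zero_le g)) g hfree v hv
  refine ⟨k, ⟨hk0, hkN, hksum⟩, ?_⟩
  rintro l ⟨hl0, hlN, hlsum⟩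
  funext i
  rcases Nat.lt_or_ge g i with h | h
  · rw [hk0 i h, hl0 i h]
  · exact rep_unique M (hpos 0 (Nat.zero_le g)) g l k hlN hkN (hlsum.symm.trans hksum) i h

end CurvePaper
end

section
/- Let M_0, M_1, …, M_g be positive integers, set e_i := gcd(M_0, …, M_i) and N_i := e_{i−1}/e_i for 1 ≤ i ≤ g, and assume N_i·M_i ∈ ⟨M_0, …, M_{i−1}⟩ for every 1 ≤ i ≤ g. Then for the semigroup S := ⟨M_0, …, M_g⟩ the identity (Σ_{v ∈ S} t^v) · ∏_{i=0}^{g} (1 − t^{M_i}) = ∏_{i=1}^{g} (1 − t^{N_i M_i}) holds in ℤ[[t]]. -/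
/-!
The identity is proved one generator at a time. Write `S k = ⟨M_0, …, M_{k-1}⟩`, `m = M_k` and
`N = N_k`. Adjoining `m` to `S k` multiplies the generating series by `(1 - t^{N m}) / (1 - t^m)`
(`genSeries_mul_step`), and the product formula telescopes from
`(Σ_{v ∈ ⟨M_0⟩} t^v) (1 - t^{M_0}) = 1` (`genSeries_mul_base`).

Since `S (k+1)` is stable under adding `m` and `S k` is stable under adding `N m`, comparing
coefficients in the step amounts to the following: the elements `v` of `S (k+1)` with
`v - m ∉ S (k+1)` are exactly the elements `v` of `S k` with `v - N m ∉ S k`. The point is that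
if `s + j m ∈ S k` with `s ∈ S k`, then `e_{k-1} ∣ j m`, whence `N ∣ j`.
-/

namespace CurvePaper

open Classical in
/-- The generating series `Σ_{v ∈ S} t^v` of an additive submonoid `S` of `ℕ`. -/
noncomputable def genSeries (S : AddSubmonoid ℕ) : PowerSeries ℤ :=
  PowerSeries.mk fun v => if v ∈ S then (1 : ℤ) else 0

open Classical in
lemma coeff_genSeries_mul (S : AddSubmonoid ℕ) {a : ℕ} (ha : a ∈ S) (v : ℕ) :
    PowerSeries.coeff v (genSeries S * (1 - (PowerSeries.X : PowerSeries ℤ) ^ a)) =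
      if v ∈ S ∧ ¬ ∃ u ∈ S, v = u + a then (1 : ℤ) else 0 := by
  rw [mul_sub, mul_one, map_sub, PowerSeries.coeff_mul_X_pow']
  simp only [genSeries, PowerSeries.coeff_mk]
  by_cases hu : ∃ u ∈ S, v = u + a
  · obtain ⟨u, hu, rfl⟩ := hu
    have : u + a ∈ S := S.add_mem hu ha
    simp [this, hu]
  · have h0 : ¬ (a ≤ v ∧ v - a ∈ S) := fun h => hu ⟨v - a, h.2, by omega⟩
    have h1 : (if a ≤ v then (if v - a ∈ S then (1 : ℤ) else 0) else 0) = 0 := by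
      split_ifs with h2 h3
      · exact absurd ⟨h2, h3⟩ h0
      · rfl
      · rfl
    rw [h1]
    simp [hu]

/-- Adjoining a generator `m` to `S ⊆ eℕ`, where `(e / gcd(m, e)) m` already lies in `S`. -/
lemma genSeries_mul_step (S S' : AddSubmonoid ℕ) (e m : ℕ) (he : 0 < e)
    (hdvd : ∀ s ∈ S, e ∣ s) (hN : e / Nat.gcd m e * m ∈ S)
    (hS' : ∀ v, v ∈ S' ↔ ∃ s ∈ S, ∃ j : ℕ, v = s + j * m) :
    genSeries S' * (1 - (PowerSeries.X : PowerSeries ℤ) ^ m) =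
      genSeries S * (1 - (PowerSeries.X : PowerSeries ℤ) ^ (e / Nat.gcd m e * m)) := by
  have hm : m ∈ S' := (hS' m).2 ⟨0, S.zero_mem, 1, by simp⟩
  have hg : 0 < Nat.gcd m e := Nat.gcd_pos_of_pos_right _ he
  have hNpos : 0 < e / Nat.gcd m e :=
    Nat.div_pos (Nat.le_of_dvd he (Nat.gcd_dvd_right _ _)) hg
  have hkey : ∀ j, e ∣ j * m → e / Nat.gcd m e ∣ j := by
    intro j hj
    have hcop : Nat.Coprime (e / Nat.gcd m e) (m / Nat.gcd m e) :=
      (Nat.coprime_div_gcd_div_gcd hg).symm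
    refine hcop.dvd_of_dvd_mul_right ?_
    rw [← Nat.mul_div_assoc _ (Nat.gcd_dvd_left m e)]
    exact Nat.div_dvd_div (Nat.gcd_dvd_right m e) hj
  ext v
  rw [coeff_genSeries_mul S' hm, coeff_genSeries_mul S hN]
  generalize e / Nat.gcd m e = N at *
  congr 1
  apply propext
  constructor
  · rintro ⟨hv, hnot⟩
    obtain ⟨s, hs, j, rfl⟩ := (hS' v).1 hv
    cases j with
    | succ j =>
      exact absurd ⟨s + j * m, (hS' _).2 ⟨s, hs, j, rfl⟩, by ring⟩ hnot
    | zero =>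
      refine ⟨by simpa using hs, ?_⟩
      rintro ⟨w, hw, h⟩
      obtain ⟨n, rfl⟩ : ∃ n, N = n + 1 := ⟨N - 1, by omega⟩
      exact hnot ⟨w + n * m, (hS' _).2 ⟨w, hw, n, rfl⟩, by rw [h]; ring⟩
  · rintro ⟨hv, hnot⟩
    refine ⟨(hS' v).2 ⟨v, hv, 0, by simp⟩, ?_⟩
    rintro ⟨u, hu, rfl⟩
    obtain ⟨s, hs, j, rfl⟩ := (hS' u).1 hu
    have h1 : e ∣ (j + 1) * m := by
      have h2 : e ∣ s + (j + 1) * m := by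
        have := hdvd _ hv
        rwa [show s + j * m + m = s + (j + 1) * m by ring] at this
      exact (Nat.dvd_add_right (hdvd s hs)).1 h2
    obtain ⟨q, hq⟩ := hkey _ h1
    cases q with
    | zero => simp at hq
    | succ q =>
      refine hnot ⟨s + q * (N * m), S.add_mem hs (by simpa using S.nsmul_mem hN q), ?_⟩
      calc s + j * m + m = s + (j + 1) * m := by ring
        _ = _ := by rw [hq]; ring

lemma genSeries_mul_base (S : AddSubmonoid ℕ) (m : ℕ) (hm : 0 < m)
    (hS : ∀ v, v ∈ S ↔ ∃ j : ℕ, v = j * m) :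
    genSeries S * (1 - (PowerSeries.X : PowerSeries ℤ) ^ m) = 1 := by
  ext v
  rw [coeff_genSeries_mul S ((hS m).2 ⟨1, by simp⟩), PowerSeries.coeff_one]
  congr 1
  apply propext
  constructor
  · rintro ⟨hv, hnot⟩
    obtain ⟨j, rfl⟩ := (hS v).1 hv
    cases j with
    | zero => simp
    | succ j => exact absurd ⟨j * m, (hS _).2 ⟨j, rfl⟩, by ring⟩ hnot
  · rintro rfl
    refine ⟨S.zero_mem, ?_⟩
    rintro ⟨u, -, h⟩
    omega

lemma mem_closure_Iic_succ (M : ℕ → ℕ) (k v : ℕ) :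
    v ∈ AddSubmonoid.closure (M '' Set.Iic (k + 1)) ↔
      ∃ s ∈ AddSubmonoid.closure (M '' Set.Iic k), ∃ j : ℕ, v = s + j * M (k + 1) := by
  have h : Set.Iic (k + 1) = Set.Iic k ∪ {k + 1} := by
    ext x
    simp only [Set.mem_Iic, Set.mem_union, Set.mem_singleton_iff]
    omega
  rw [h, Set.image_union, Set.image_singleton, AddSubmonoid.closure_union, AddSubmonoid.mem_sup]
  simp only [AddSubmonoid.mem_closure_singleton, smul_eq_mul]
  constructor
  · rintro ⟨s, hs, _, ⟨j, rfl⟩, rfl⟩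
    exact ⟨s, hs, j, rfl⟩
  · rintro ⟨s, hs, j, rfl⟩
    exact ⟨s, hs, _, ⟨j, rfl⟩, rfl⟩

lemma gcd_dvd_of_mem_closure (M : ℕ → ℕ) (k s : ℕ)
    (hs : s ∈ AddSubmonoid.closure (M '' Set.Iic k)) : (Finset.range (k + 1)).gcd M ∣ s := by
  induction hs using AddSubmonoid.closure_induction with
  | mem x hx =>
    obtain ⟨i, hi, rfl⟩ := hx
    exact Finset.gcd_dvd (Finset.mem_range.2 (Nat.lt_succ_of_le hi))
  | zero => exact dvd_zero _
  | add x y _ _ hx hy => exact dvd_add hx hy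

open Classical in
/-- Here `(Finset.range (i+1)).gcd M` is `e_i = gcd(M_0, …, M_i)` and
`(Finset.range i).gcd M / (Finset.range (i+1)).gcd M` is `N_i = e_{i-1}/e_i`. -/
theorem statement14 (g : ℕ) (M : ℕ → ℕ) (hpos : ∀ i ≤ g, 0 < M i)
    (hfree : ∀ i, 1 ≤ i → i ≤ g →
      ((Finset.range i).gcd M / (Finset.range (i + 1)).gcd M) * M i ∈
        AddSubmonoid.closure (M '' Set.Iio i)) :
    (PowerSeries.mk fun v =>
        if v ∈ AddSubmonoid.closure (M '' Set.Iic g) then (1 : ℤ) else 0) *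
      ∏ i ∈ Finset.range (g + 1), (1 - (PowerSeries.X : PowerSeries ℤ) ^ (M i)) =
    ∏ i ∈ Finset.Icc 1 g,
      (1 - (PowerSeries.X : PowerSeries ℤ) ^
        (((Finset.range i).gcd M / (Finset.range (i + 1)).gcd M) * M i)) := by
  change genSeries (AddSubmonoid.closure (M '' Set.Iic g)) * _ = _
  induction g with
  | zero =>
    have h : Set.Iic 0 = ({0} : Set ℕ) := by ext x; simp
    have hb := genSeries_mul_base (AddSubmonoid.closure (M '' Set.Iic 0)) (M 0)
      (hpos 0 le_rfl) (fun v => by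
        rw [h, Set.image_singleton, AddSubmonoid.mem_closure_singleton]
        simp only [smul_eq_mul, eq_comm])
    simpa using hb
  | succ k ih =>
    have ih' := ih (fun i hi => hpos i (by omega)) (fun i h1 h2 => hfree i h1 (by omega))
    have hgcd : (Finset.range (k + 1 + 1)).gcd M
        = Nat.gcd (M (k + 1)) ((Finset.range (k + 1)).gcd M) := by
      rw [Finset.range_add_one (n := k + 1), Finset.gcd_insert]
      rfl
    have he : 0 < (Finset.range (k + 1)).gcd M := by
      refine Nat.pos_of_dvd_of_pos (Finset.gcd_dvd (b := 0) (by simp)) (hpos 0 (by omega))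
    have hIio : Set.Iio (k + 1) = Set.Iic k := by
      ext x
      simp only [Set.mem_Iio, Set.mem_Iic]
      omega
    have hN := hfree (k + 1) (by omega) le_rfl
    rw [hgcd, hIio] at hN
    have hstep := genSeries_mul_step _ _ _ (M (k + 1)) he (gcd_dvd_of_mem_closure M k) hN
      (mem_closure_Iic_succ M k)
    rw [Finset.prod_range_succ, Finset.prod_Icc_succ_top (by omega), ← ih', hgcd,
      mul_comm (∏ i ∈ Finset.range (k + 1), _), ← mul_assoc, hstep]
    ring

end CurvePaper
end
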